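/- Let G be a finite simple graph, let C be a set of simple cycles of G, and let e and e' be two distinct edges of G. For any two linear orders <₁ and <₂ on the vertices of G, the unordered pair of counts {Γ_{ee'}, Γ_{e'e}} computed with respect to <₁ equals the unordered pair {Γ_{ee'}, Γ_{e'e}} computed with respect to <₂. -/

import Mathlib

/-!
For a fixed order, exactly one of `Γ e e'`, `Γ e' e` counts the cycles through `e` and `e'` in
which they are aligned (`A`), and the other counts those in which they are not (`N`); so the
unordered pair is `{A, N}` (`Gamma_pair`).

A simple cycle has exactly two cyclic orientations (`traverses_iff_or_iff`): every vertex of a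
cycle has a unique incoming dart, so two cycles with the same edges which agree on one dart agree
on the following one, and hence everywhere. Consequently, alignment may be tested on any single
orientation `w` of the cycle. Writing `e = s(a, b)` and `e' = s(c, d)`, alignment for the order `o`
says that an even number of the four statements `a < b`, `w` traverses `(a, b)`, `c < d`,
`w` traverses `(c, d)` are false (`alignedInCycle_iff`). Only `a < b` and `c < d` depend on `o`, and
they do not depend on the cycle. Thus a change of order either preserves alignment in all cycles,
fixing `A` and `N`, or reverses it in all cycles, exchanging `A` and `N`.
-/

open scoped Classical

open SimpleGraph Finset

variable {V : Type*}

/-- The walk `w` traverses the ordered pair of vertices `(a, b)` as one of its steps. -/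
def TraversesPair {G : SimpleGraph V} {x y : V} (w : G.Walk x y) (a b : V) : Prop :=
  (a, b) ∈ w.darts.map SimpleGraph.Dart.toProd

/-- The edge `e` is traversed by `w` from its smaller to its larger endpoint,
with respect to the linear order `o` on the vertices. -/
def TraversedUp (o : LinearOrder V) {G : SimpleGraph V} {x y : V} (w : G.Walk x y)
    (e : Sym2 V) : Prop :=
  ∃ a b : V, o.lt a b ∧ e = s(a, b) ∧ TraversesPair w a b

/-- The edge `e` is traversed by `w` from its larger to its smaller endpoint,
with respect to the linear order `o` on the vertices. -/
def TraversedDown (o : LinearOrder V) {G : SimpleGraph V} {x y : V} (w : G.Walk x y)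
    (e : Sym2 V) : Prop :=
  ∃ a b : V, o.lt a b ∧ e = s(a, b) ∧ TraversesPair w b a

/-- Two edges are aligned in the (oriented) closed walk `w` if both are traversed from
smaller to larger endpoint, or both from larger to smaller endpoint. -/
def AlignedIn (o : LinearOrder V) {G : SimpleGraph V} {x y : V} (w : G.Walk x y)
    (e e' : Sym2 V) : Prop :=
  (TraversedUp o w e ∧ TraversedUp o w e') ∨ (TraversedDown o w e ∧ TraversedDown o w e')

/-- `γ` is the edge set of a simple cycle of `G`.  A simple cycle, identified up to rotation
and reflection, is determined by its edge set. -/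
def IsCycleEdgeSet [DecidableEq V] (G : SimpleGraph V) (γ : Finset (Sym2 V)) : Prop :=
  ∃ (x : V) (w : G.Walk x x), w.IsCycle ∧ w.edges.toFinset = γ

/-- Edges `e` and `e'` are aligned in the simple cycle with edge set `γ`, i.e. aligned with
respect to some (equivalently, any) cyclic orientation of that cycle. -/
def AlignedInCycle (o : LinearOrder V) [DecidableEq V] (G : SimpleGraph V)
    (γ : Finset (Sym2 V)) (e e' : Sym2 V) : Prop :=
  ∃ (x : V) (w : G.Walk x x), w.IsCycle ∧ w.edges.toFinset = γ ∧ AlignedIn o w e e'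

/-- The smaller endpoint of an edge, with respect to the linear order `o`. -/
def emin (o : LinearOrder V) (e : Sym2 V) : V :=
  letI := o
  Sym2.lift ⟨fun a b => min a b, fun a b => min_comm a b⟩ e

/-- The larger endpoint of an edge, with respect to the linear order `o`. -/
def emax (o : LinearOrder V) (e : Sym2 V) : V :=
  letI := o
  Sym2.lift ⟨fun a b => max a b, fun a b => max_comm a b⟩ e

/-- The lexicographic order on edges induced by the linear order `o` on vertices. -/
def edgeLT (o : LinearOrder V) (e e' : Sym2 V) : Prop :=
  o.lt (emin o e) (emin o e') ∨ (emin o e = emin o e' ∧ o.lt (emax o e) (emax o e'))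

/-- The cycle-count matrix `Γ` associated with a set `C` of simple cycles (given by their edge
sets): `Γ e e` is the number of cycles in `C` containing `e`; for `e ≠ e'`, `Γ e e'` is the
number of cycles of `C` in which `e, e'` are aligned if `e < e'`, and the number of cycles of
`C` containing both in which they are not aligned if `e > e'`. -/
noncomputable def Gamma (o : LinearOrder V) [DecidableEq V] (G : SimpleGraph V)
    (C : Finset (Finset (Sym2 V))) (e e' : Sym2 V) : ℕ :=
  if e = e' then {γ ∈ (C : Set (Finset (Sym2 V))) | e ∈ γ}.ncard
  else if edgeLT o e e' then
    {γ ∈ (C : Set (Finset (Sym2 V))) | AlignedInCycle o G γ e e'}.ncard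
  else
    {γ ∈ (C : Set (Finset (Sym2 V))) | e ∈ γ ∧ e' ∈ γ ∧ ¬ AlignedInCycle o G γ e e'}.ncard

/-- Two edges share a vertex. -/
def ShareVertex (e e' : Sym2 V) : Prop :=
  ∃ v, v ∈ e ∧ v ∈ e'

/-- The augmented Forman–Ricci curvature of the edge `e` with respect to the set `C` of
simple cycles (given by their edge sets), and the linear order `o` on the vertices. -/
noncomputable def AF (o : LinearOrder V) [Fintype V] [DecidableEq V] (G : SimpleGraph V)
    (C : Finset (Finset (Sym2 V))) (e : Sym2 V) : ℤ :=
  2 + (Gamma o G C e e : ℤ)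
    - ∑ e' ∈ G.edgeFinset.filter (fun e' => e' ≠ e ∧ ShareVertex e e'),
        |(Gamma o G C e e' : ℤ) + (Gamma o G C e' e : ℤ) - 1|
    - ∑ e' ∈ G.edgeFinset.filter (fun e' => e' ≠ e ∧ ¬ ShareVertex e e'),
        |(Gamma o G C e e' : ℤ) - (Gamma o G C e' e : ℤ)|

/-! ### Orientations of a simple cycle -/

section Orientation

variable {G : SimpleGraph V}

lemma traversesPair_iff {x y : V} (w : G.Walk x y) (a b : V) :
    TraversesPair w a b ↔ ∃ h : G.Adj a b, (⟨(a, b), h⟩ : G.Dart) ∈ w.darts := by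
  unfold TraversesPair
  rw [List.mem_map]
  constructor
  · rintro ⟨⟨⟨a', b'⟩, h⟩, hd, heq⟩
    cases heq
    exact ⟨h, hd⟩
  · rintro ⟨h, hd⟩
    exact ⟨_, hd, rfl⟩

lemma traversesPair_reverse {x y : V} (w : G.Walk x y) (a b : V) :
    TraversesPair w.reverse a b ↔ TraversesPair w b a := by
  simp only [traversesPair_iff, Walk.mem_darts_reverse]
  exact ⟨fun ⟨h, hd⟩ => ⟨h.symm, hd⟩, fun ⟨h, hd⟩ => ⟨h.symm, hd⟩⟩

lemma mem_edges_iff_traverses {x y : V} (w : G.Walk x y) (a b : V) :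
    s(a, b) ∈ w.edges ↔ TraversesPair w a b ∨ TraversesPair w b a := by
  simp only [traversesPair_iff, Walk.edges, List.mem_map]
  constructor
  · rintro ⟨⟨⟨a', b'⟩, h⟩, hd, heq⟩
    rcases Sym2.eq_iff.1 heq with ⟨h1, h2⟩ | ⟨h1, h2⟩
    · subst h1 h2; exact Or.inl ⟨h, hd⟩
    · subst h1 h2; exact Or.inr ⟨h, hd⟩
  · rintro (⟨h, hd⟩ | ⟨h, hd⟩)
    · exact ⟨_, hd, rfl⟩
    · exact ⟨_, hd, Sym2.eq_swap⟩

/-- A trail uses each edge in only one direction. -/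
lemma not_traverses_swap {x y : V} {w : G.Walk x y} (hw : w.IsTrail) {a b : V}
    (h1 : TraversesPair w a b) : ¬ TraversesPair w b a := by
  intro h2
  obtain ⟨h, hd⟩ := (traversesPair_iff w a b).1 h1
  obtain ⟨h', hd'⟩ := (traversesPair_iff w b a).1 h2
  have := List.inj_on_of_nodup_map hw.edges_nodup hd hd' Sym2.eq_swap
  have hab : a = b := congrArg (fun d : G.Dart => d.fst) this
  exact h.ne hab

/-- A vertex of a cycle has only one incoming dart. -/
lemma pred_unique {x : V} {w : G.Walk x x} (hw : w.IsCycle) {a b c : V}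
    (h1 : TraversesPair w a c) (h2 : TraversesPair w b c) : a = b := by
  obtain ⟨h, hd⟩ := (traversesPair_iff w a c).1 h1
  obtain ⟨h', hd'⟩ := (traversesPair_iff w b c).1 h2
  have hn : (w.darts.map (·.snd)).Nodup := by
    rw [Walk.map_snd_darts]; exact hw.support_nodup
  have := List.inj_on_of_nodup_map hn hd hd' rfl
  exact congrArg (fun d : G.Dart => d.fst) this

/-- A trail inside a cycle `w` that starts at the head of a dart `(z, u)` of `w`, and does not use
the edge of that dart, follows the direction of `w` throughout. -/
lemma traverses_of_trail {x : V} {w : G.Walk x x} (hw : w.IsCycle) {u v : V} (q : G.Walk u v) :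
    q.IsTrail → q.edges ⊆ w.edges → ∀ z, TraversesPair w z u → s(z, u) ∉ q.edges →
      ∀ a b, TraversesPair q a b → TraversesPair w a b := by
  induction q with
  | nil => intro _ _ z _ _ a b h; simp [TraversesPair] at h
  | @cons u t v h q ih =>
    intro ht hs z hz hne a b hab
    rw [Walk.isTrail_cons] at ht
    simp only [Walk.edges_cons, List.cons_subset] at hs
    -- The only other option is that `w` enters `u` from `t`, forcing `z = t`.
    have hut : TraversesPair w u t := by
      rcases (mem_edges_iff_traverses w u t).1 hs.1 with h1 | h1
      · exact h1
      · have := pred_unique hw hz h1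
        subst this
        exact absurd (by simp [Sym2.eq_swap]) hne
    have hcases : (a = u ∧ b = t) ∨ TraversesPair q a b := by
      simpa [TraversesPair] using hab
    rcases hcases with ⟨rfl, rfl⟩ | hq
    · exact hut
    · exact ih ht.1 hs.2 u hut ht.2 a b hq

/-- If two cycles have the same edges and the first dart of one is a dart of the other, then they
have the same darts. -/
lemma traverses_iff_of_first {x y t : V} {w : G.Walk x x} (hw : w.IsCycle) (h : G.Adj y t)
    (q : G.Walk t y) (hw' : (Walk.cons h q).IsCycle)
    (hE : ∀ e, e ∈ w.edges ↔ e ∈ (Walk.cons h q).edges) (h0 : TraversesPair w y t) (a b : V) :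
    TraversesPair w a b ↔ TraversesPair (Walk.cons h q) a b := by
  have key : ∀ a b, TraversesPair (Walk.cons h q) a b → TraversesPair w a b := by
    intro a b hab
    have ht := (Walk.isTrail_cons _ _).1 hw'.isTrail
    have hcases : (a = y ∧ b = t) ∨ TraversesPair q a b := by
      simpa [TraversesPair] using hab
    rcases hcases with ⟨rfl, rfl⟩ | hq
    · exact h0
    · exact traverses_of_trail hw q ht.1 (fun e he => (hE e).2 (by simp [he])) y h0 ht.2 a b hq
  refine ⟨fun hab => ?_, key a b⟩
  have := (hE _).1 ((mem_edges_iff_traverses w a b).2 (Or.inl hab))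
  rcases (mem_edges_iff_traverses _ a b).1 this with h1 | h1
  · exact h1
  · exact absurd (key _ _ h1) (not_traverses_swap hw.isTrail hab)

/-- A simple cycle has only two cyclic orientations: cycles with the same edges have either the
same darts or opposite darts. -/
lemma traverses_iff_or_iff {x y : V} {w : G.Walk x x} {w' : G.Walk y y} (hw : w.IsCycle)
    (hw' : w'.IsCycle) (hE : ∀ e, e ∈ w.edges ↔ e ∈ w'.edges) :
    (∀ a b, TraversesPair w a b ↔ TraversesPair w' a b) ∨
      (∀ a b, TraversesPair w b a ↔ TraversesPair w' a b) := by
  cases w' with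
  | nil => exact absurd hw' (by simp)
  | @cons _ t _ h q =>
    rcases (mem_edges_iff_traverses w y t).1 ((hE _).2 (by simp)) with h0 | h0
    · exact Or.inl (traverses_iff_of_first hw h q hw' hE h0)
    · refine Or.inr fun a b => ?_
      rw [← traversesPair_reverse]
      exact traverses_iff_of_first hw.reverse h q hw' (fun e => by simpa using hE e)
        ((traversesPair_reverse w y t).2 h0) a b

end Orientation

/-! ### Alignment of two edges in a cycle -/

section Alignment

variable {G : SimpleGraph V}

/-- Reversing the names `a, b` of the endpoints changes both sides of the inner equivalence, so no
assumption on which endpoint is smaller is needed. -/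
lemma traversedUp_iff (o : LinearOrder V) {x y : V} {w : G.Walk x y} (hw : w.IsTrail) {a b : V}
    (he : s(a, b) ∈ w.edges) :
    TraversedUp o w s(a, b) ↔ (o.lt a b ↔ TraversesPair w a b) := by
  have hne : a ≠ b := (w.adj_of_mem_edges he).ne
  have h1 := (mem_edges_iff_traverses w a b).1 he
  have h2 := @not_traverses_swap V G x y w hw a b
  have h3 : o.lt a b → ¬ o.lt b a := fun h => lt_asymm h
  have h4 : o.lt a b ∨ o.lt b a := lt_or_gt_of_ne hne
  have h5 : TraversedUp o w s(a, b) ↔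
      (o.lt a b ∧ TraversesPair w a b) ∨ (o.lt b a ∧ TraversesPair w b a) := by
    constructor
    · rintro ⟨c, d, hlt, heq, hT⟩
      rcases Sym2.eq_iff.1 heq with ⟨rfl, rfl⟩ | ⟨rfl, rfl⟩
      · exact Or.inl ⟨hlt, hT⟩
      · exact Or.inr ⟨hlt, hT⟩
    · rintro (⟨h, hT⟩ | ⟨h, hT⟩)
      · exact ⟨a, b, h, rfl, hT⟩
      · exact ⟨b, a, h, Sym2.eq_swap, hT⟩
  tauto

lemma traversedDown_iff_reverse (o : LinearOrder V) {x y : V} (w : G.Walk x y) (e : Sym2 V) :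
    TraversedDown o w e ↔ TraversedUp o w.reverse e := by
  simp only [TraversedDown, TraversedUp, traversesPair_reverse]

lemma traverses_swap_iff {x y : V} {w : G.Walk x y} (hw : w.IsTrail) {a b : V}
    (he : s(a, b) ∈ w.edges) : TraversesPair w b a ↔ ¬ TraversesPair w a b :=
  ⟨fun h h' => not_traverses_swap hw h h',
    ((mem_edges_iff_traverses w a b).1 he).resolve_left⟩

lemma alignedIn_iff (o : LinearOrder V) {x y : V} {w : G.Walk x y} (hw : w.IsTrail)
    {a b c d : V} (he : s(a, b) ∈ w.edges) (he' : s(c, d) ∈ w.edges) :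
    AlignedIn o w s(a, b) s(c, d) ↔
      ((o.lt a b ↔ TraversesPair w a b) ↔ (o.lt c d ↔ TraversesPair w c d)) := by
  unfold AlignedIn
  rw [traversedDown_iff_reverse, traversedDown_iff_reverse, traversedUp_iff o hw he,
    traversedUp_iff o hw he', traversedUp_iff o hw.reverse (by simpa using he),
    traversedUp_iff o hw.reverse (by simpa using he'), traversesPair_reverse,
    traversesPair_reverse, traverses_swap_iff hw he, traverses_swap_iff hw he']
  tauto

/-- Alignment in a cycle can be tested on any one of its orientations `w`. -/
lemma alignedInCycle_iff [DecidableEq V] (o : LinearOrder V) {γ : Finset (Sym2 V)} {x : V}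
    {w : G.Walk x x} (hw : w.IsCycle) (hγ : w.edges.toFinset = γ) {a b c d : V}
    (he : s(a, b) ∈ γ) (he' : s(c, d) ∈ γ) :
    AlignedInCycle o G γ s(a, b) s(c, d) ↔
      ((o.lt a b ↔ TraversesPair w a b) ↔ (o.lt c d ↔ TraversesPair w c d)) := by
  have mem : ∀ {y : V} {w' : G.Walk y y}, w'.edges.toFinset = γ → ∀ e, e ∈ w'.edges ↔ e ∈ γ := by
    rintro y w' rfl e
    simp
  constructor
  · rintro ⟨y, w', hw', hγ', hal⟩
    have ha := (mem hγ' _).2 he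
    have hc := (mem hγ' _).2 he'
    rw [alignedIn_iff o hw'.isTrail ha hc] at hal
    rcases traverses_iff_or_iff hw hw' (fun e => (mem hγ e).trans (mem hγ' e).symm) with h | h
    · rwa [h, h]
    · rw [h b a, h d c, traverses_swap_iff hw'.isTrail ha, traverses_swap_iff hw'.isTrail hc]
      tauto
  · intro h
    exact ⟨x, w, hw, hγ, (alignedIn_iff o hw.isTrail ((mem hγ _).2 he) ((mem hγ _).2 he')).2 h⟩

lemma mem_of_alignedInCycle [DecidableEq V] {o : LinearOrder V} {γ : Finset (Sym2 V)}
    {e e' : Sym2 V} (h : AlignedInCycle o G γ e e') : e ∈ γ ∧ e' ∈ γ := by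
  obtain ⟨x, w, hw, rfl, hal⟩ := h
  have up : ∀ {e}, TraversedUp o w e → e ∈ w.edges := by
    rintro _ ⟨a, b, _, rfl, hT⟩
    exact (mem_edges_iff_traverses w a b).2 (Or.inl hT)
  have down : ∀ {e}, TraversedDown o w e → e ∈ w.edges := by
    rintro _ ⟨a, b, _, rfl, hT⟩
    exact (mem_edges_iff_traverses w a b).2 (Or.inr hT)
  rcases hal with ⟨h, h'⟩ | ⟨h, h'⟩
  · simp [up h, up h']
  · simp [down h, down h']

lemma alignedInCycle_comm [DecidableEq V] (o : LinearOrder V) (γ : Finset (Sym2 V))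
    (e e' : Sym2 V) : AlignedInCycle o G γ e e' ↔ AlignedInCycle o G γ e' e := by
  simp only [AlignedInCycle, AlignedIn, and_comm]

end Alignment

/-! ### Entries of the cycle-count matrix -/

lemma mk_emin_emax (o : LinearOrder V) (e : Sym2 V) : s(emin o e, emax o e) = e := by
  let _ := o
  induction e using Sym2.ind with
  | _ a b =>
    change s(min a b, max a b) = s(a, b)
    rcases le_total a b with h | h
    · rw [min_eq_left h, max_eq_right h]
    · rw [min_eq_right h, max_eq_left h, Sym2.eq_swap]

lemma edgeLT_swap_iff (o : LinearOrder V) {e e' : Sym2 V} (hne : e ≠ e') :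
    edgeLT o e' e ↔ ¬ edgeLT o e e' := by
  let _ := o
  have h : ¬ (emin o e = emin o e' ∧ emax o e = emax o e') := by
    rintro ⟨h1, h2⟩
    apply hne
    rw [← mk_emin_emax o e, ← mk_emin_emax o e', h1, h2]
  change (emin o e' < emin o e ∨ (emin o e' = emin o e ∧ emax o e' < emax o e)) ↔
    ¬ (emin o e < emin o e' ∨ (emin o e = emin o e' ∧ emax o e < emax o e'))
  rcases lt_trichotomy (emin o e) (emin o e') with h1 | h1 | h1
  · simp [h1, h1.not_gt, h1.ne']
  · rcases lt_trichotomy (emax o e) (emax o e') with h2 | h2 | h2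
    · simp [h1, h2, h2.le]
    · exact absurd ⟨h1, h2⟩ h
    · simp [h1, h2, h2.le]
  · simp [h1, h1.not_gt, h1.ne']

/-- The unordered pair of entries of `Γ` consists of the number of cycles through `e` and `e'` in
which they are aligned, and the number of those in which they are not. -/
lemma Gamma_pair [DecidableEq V] (o : LinearOrder V) (G : SimpleGraph V)
    (C : Finset (Finset (Sym2 V))) {e e' : Sym2 V} (hne : e ≠ e') :
    ({Gamma o G C e e', Gamma o G C e' e} : Multiset ℕ) =
      {{γ ∈ (C : Set (Finset (Sym2 V))) | e ∈ γ ∧ e' ∈ γ ∧ AlignedInCycle o G γ e e'}.ncard,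
       {γ ∈ (C : Set (Finset (Sym2 V))) | e ∈ γ ∧ e' ∈ γ ∧ ¬ AlignedInCycle o G γ e e'}.ncard} := by
  have hA : ∀ γ, (e ∈ γ ∧ e' ∈ γ ∧ AlignedInCycle o G γ e e') ↔ AlignedInCycle o G γ e e' :=
    fun γ => ⟨fun h => h.2.2,
      fun h => ⟨(mem_of_alignedInCycle h).1, (mem_of_alignedInCycle h).2, h⟩⟩
  unfold Gamma
  simp only [if_neg hne, if_neg hne.symm, edgeLT_swap_iff o hne, alignedInCycle_comm o _ e' e]
  by_cases h : edgeLT o e e'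
  · simp only [h, if_true, not_true_eq_false, if_false, hA, and_left_comm (a := e' ∈ _)]
  · simp only [h, if_true, not_false_eq_true, if_false, hA]
    exact Multiset.pair_comm _ _

/-- Adding truth values modulo 2: replacing `p, r` by `q, s` preserves the truth value of
`(p ↔ t) ↔ (r ↔ u)` exactly when an even number of the two replacements change the truth value. -/
lemma iff_parity {p q r s t u : Prop} :
    ((p ↔ q) ↔ (r ↔ s)) ↔ (((p ↔ t) ↔ (r ↔ u)) ↔ ((q ↔ t) ↔ (s ↔ u))) := by
  by_cases p <;> by_cases q <;> by_cases r <;> by_cases s <;> by_cases t <;> by_cases u <;>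
    simp_all only [iff_true, iff_false, not_true_eq_false]

/-- Let `G` be a finite simple graph, `C` a set of simple cycles of `G`
(given by their edge sets), and `e ≠ e'` two distinct edges of `G`.  For any two linear orders
`o₁` and `o₂` on the vertices, the unordered pair of counts `{Γ e e', Γ e' e}` computed with
respect to `o₁` equals the unordered pair computed with respect to `o₂`. -/
theorem stmt2 {V : Type*} [Fintype V] [DecidableEq V] (o₁ o₂ : LinearOrder V)
    (G : SimpleGraph V) (C : Finset (Finset (Sym2 V)))
    (hC : ∀ γ ∈ C, IsCycleEdgeSet G γ)
    {e e' : Sym2 V} (he : e ∈ G.edgeSet) (he' : e' ∈ G.edgeSet) (hne : e ≠ e') :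
    ({Gamma o₁ G C e e', Gamma o₁ G C e' e} : Multiset ℕ)
      = ({Gamma o₂ G C e e', Gamma o₂ G C e' e} : Multiset ℕ) := by
  rw [Gamma_pair o₁ G C hne, Gamma_pair o₂ G C hne]
  induction e using Sym2.ind with | _ a b
  induction e' using Sym2.ind with | _ c d
  -- Alignment is preserved if the orders disagree on neither or both of the two edges, and
  -- reversed if they disagree on exactly one; this does not depend on the cycle.
  by_cases h : (o₁.lt a b ↔ o₂.lt a b) ↔ (o₁.lt c d ↔ o₂.lt c d)
  · have key : ∀ γ ∈ C, s(a, b) ∈ γ → s(c, d) ∈ γ →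
        (AlignedInCycle o₁ G γ s(a, b) s(c, d) ↔ AlignedInCycle o₂ G γ s(a, b) s(c, d)) := by
      intro γ hγ h1 h2
      obtain ⟨x, w, hw, hE⟩ := hC γ hγ
      rw [alignedInCycle_iff o₁ hw hE h1 h2, alignedInCycle_iff o₂ hw hE h1 h2]
      exact iff_parity.1 h
    congr 2
    · ext γ
      have := key γ
      simp only [Set.mem_ofPred_eq, Finset.mem_coe]
      tauto
    · congr 1
      ext γ
      have := key γ
      simp only [Set.mem_ofPred_eq, Finset.mem_coe]
      tauto
  · have key : ∀ γ ∈ C, s(a, b) ∈ γ → s(c, d) ∈ γ →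
        (AlignedInCycle o₁ G γ s(a, b) s(c, d) ↔ ¬ AlignedInCycle o₂ G γ s(a, b) s(c, d)) := by
      intro γ hγ h1 h2
      obtain ⟨x, w, hw, hE⟩ := hC γ hγ
      rw [alignedInCycle_iff o₁ hw hE h1 h2, alignedInCycle_iff o₂ hw hE h1 h2,
        iff_not_comm, iff_comm, ← not_iff]
      exact fun h0 => h (iff_parity.2 h0)
    rw [Multiset.pair_comm]
    congr 2
    · ext γ
      have := key γ
      simp only [Set.mem_ofPred_eq, Finset.mem_coe]
      tauto
    · congr 1
      ext γ
      have := key γ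
      simp only [Set.mem_ofPred_eq, Finset.mem_coe]
      tauto
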